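/- For any pair (X^a u, Y^b v) ∈ Deriv(𝒫_𝒞) (with X, Y ∈ 𝒱_i, a, b ∈ {⊕,⊖}, u, v ∈ Σ*), the pair (Y^{⊖·b} v, X^{⊖·a} u) also belongs to Deriv(𝒫_𝒞). -/

import Mathlib

/-- The two-element sign monoid `{⊕, ⊖}` of variances. -/
inductive Sign : Type where
  | pos
  | neg
deriving DecidableEq, Repr

/-- Multiplication in the sign monoid (`⊕` is the identity, `⊖ · ⊖ = ⊕`). -/
def Sign.mul : Sign → Sign → Sign
  | .pos, s => s
  | .neg, .pos => .neg
  | .neg, .neg => .pos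

/-- Variance of a word in `Σ*`: `⟨ε⟩ = ⊕`, `⟨xw⟩ = ⟨x⟩·⟨w⟩`. -/
def wordSign {L : Type} (sgn : L → Sign) : List L → Sign
  | [] => .pos
  | x :: w => (sgn x).mul (wordSign sgn w)

/-- A derived type variable `α.w` with base type variable `α ∈ 𝒱` and word `w ∈ Σ*`. -/
structure DTV (V L : Type) : Type where
  base : V
  word : List L

/-- Appending a single field label to a derived type variable: `α.ℓ`. -/
def DTV.app {V L : Type} (α : DTV V L) (ℓ : L) : DTV V L :=
  ⟨α.base, α.word ++ [ℓ]⟩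

/-- A constraint: either `VAR X` or `X ⊑ Y` for derived type variables. -/
inductive Constraint (V L : Type) : Type where
  | var : DTV V L → Constraint V L
  | sub : DTV V L → DTV V L → Constraint V L

/-- Entailment `𝒞 ⊢ c`: the least relation containing `𝒞` and closed under the
deduction rules T-Left, T-Right, T-InheritL, T-InheritR, T-Prefix, S-Refl,
S-Trans, S-Field⊕, S-Field⊖ and S-Pointer. -/
inductive Entails {V L : Type} (sgn : L → Sign) (load store : L)
    (C : Set (Constraint V L)) : Constraint V L → Prop where
  | ax {c} : c ∈ C → Entails sgn load store C c
  | tLeft {α β} : Entails sgn load store C (.sub α β) →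
      Entails sgn load store C (.var α)
  | tRight {α β} : Entails sgn load store C (.sub α β) →
      Entails sgn load store C (.var β)
  | tInheritL {α β : DTV V L} {ℓ} : Entails sgn load store C (.sub α β) →
      Entails sgn load store C (.var (α.app ℓ)) →
      Entails sgn load store C (.var (β.app ℓ))
  | tInheritR {α β : DTV V L} {ℓ} : Entails sgn load store C (.sub α β) →
      Entails sgn load store C (.var (β.app ℓ)) →
      Entails sgn load store C (.var (α.app ℓ))
  | tPrefix {α : DTV V L} {ℓ} : Entails sgn load store C (.var (α.app ℓ)) →
      Entails sgn load store C (.var α)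
  | sRefl {α} : Entails sgn load store C (.var α) →
      Entails sgn load store C (.sub α α)
  | sTrans {α β γ} : Entails sgn load store C (.sub α β) →
      Entails sgn load store C (.sub β γ) →
      Entails sgn load store C (.sub α γ)
  | sFieldPos {α β : DTV V L} {ℓ} : Entails sgn load store C (.sub α β) →
      Entails sgn load store C (.var (β.app ℓ)) → sgn ℓ = .pos →
      Entails sgn load store C (.sub (α.app ℓ) (β.app ℓ))
  | sFieldNeg {α β : DTV V L} {ℓ} : Entails sgn load store C (.sub α β) →
      Entails sgn load store C (.var (β.app ℓ)) → sgn ℓ = .neg →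
      Entails sgn load store C (.sub (β.app ℓ) (α.app ℓ))
  | sPointer {α : DTV V L} : Entails sgn load store C (.var (α.app load)) →
      Entails sgn load store C (.var (α.app store)) →
      Entails sgn load store C (.sub (α.app store) (α.app load))

/-- `𝒞` is closed under T-Left, T-Right and T-Prefix. -/
def ClosedTLRP {V L : Type} (C : Set (Constraint V L)) : Prop :=
  (∀ α β : DTV V L, Constraint.sub α β ∈ C →
      Constraint.var α ∈ C ∧ Constraint.var β ∈ C) ∧
  (∀ (α : DTV V L) (ℓ : L), Constraint.var (α.app ℓ) ∈ C →
      Constraint.var α ∈ C)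

/-- Control states of the pushdown system `𝒫_𝒞`:
`Ṽ = ((lhs(𝒱_i) ⨿ rhs(𝒱_i) ⨿ 𝒱_u) × {⊕,⊖}) ∪ {#Start, #End}`.
`lt x a` is `(x_L)^a`, `rt x a` is `(x_R)^a`, `un x a` is `x^a` for
uninteresting `x`. -/
inductive Ctl (V : Type) : Type where
  | start : Ctl V
  | fin : Ctl V
  | lt : V → Sign → Ctl V
  | rt : V → Sign → Ctl V
  | un : V → Sign → Ctl V

/-- Stack symbols `Σ̃ = Σ ∪ {v^⊕, v^⊖ : v ∈ 𝒱_i}`. -/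
inductive StkSym (V L : Type) : Type where
  | lbl : L → StkSym V L
  | tv : V → Sign → StkSym V L

/-- A word of field labels seen as a stack word. -/
def symWord {V L : Type} (u : List L) : List (StkSym V L) :=
  u.map StkSym.lbl

/-- `lhs(x)^a`: tagged `x_L` if `x` is interesting, plain otherwise. -/
def lhsCtl {V : Type} (I : V → Bool) (x : V) (a : Sign) : Ctl V :=
  if I x then .lt x a else .un x a

/-- `rhs(x)^a`: tagged `x_R` if `x` is interesting, plain otherwise. -/
def rhsCtl {V : Type} (I : V → Bool) (x : V) (a : Sign) : Ctl V :=
  if I x then .rt x a else .un x a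

/-- A configuration of an unconstrained pushdown system: a control state
together with a stack word. -/
abbrev PDSConfig (V L : Type) : Type := Ctl V × List (StkSym V L)

/-- A transition rule `⟨X; u⟩ ↪ ⟨Y; v⟩`. -/
abbrev PDSRule (V L : Type) : Type := PDSConfig V L × PDSConfig V L

/-- `rule⊕(p.u ⊑ q.v) = ⟨lhs(p)^{⟨u⟩}; u⟩ ↪ ⟨rhs(q)^{⟨v⟩}; v⟩`. -/
def rulePos {V L : Type} (I : V → Bool) (sgn : L → Sign)
    (c : DTV V L × DTV V L) : PDSRule V L :=
  ((lhsCtl I c.1.base (wordSign sgn c.1.word), symWord c.1.word),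
   (rhsCtl I c.2.base (wordSign sgn c.2.word), symWord c.2.word))

/-- `rule⊖(p.u ⊑ q.v) = ⟨lhs(q)^{⊖·⟨v⟩}; v⟩ ↪ ⟨rhs(p)^{⊖·⟨u⟩}; u⟩`. -/
def ruleNeg {V L : Type} (I : V → Bool) (sgn : L → Sign)
    (c : DTV V L × DTV V L) : PDSRule V L :=
  ((lhsCtl I c.2.base (Sign.neg.mul (wordSign sgn c.2.word)), symWord c.2.word),
   (rhsCtl I c.1.base (Sign.neg.mul (wordSign sgn c.1.word)), symWord c.1.word))

/-- The transition rules `Δ = Δ_𝒞 ∪ Δ_ptr ∪ Δ_start ∪ Δ_end` of the pushdown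
system `𝒫_𝒞` associated to a set `𝒞` of subtype constraints between derived
type variables. -/
def Delta {V L : Type} (I : V → Bool) (sgn : L → Sign) (load store : L)
    (C : Set (DTV V L × DTV V L)) : Set (PDSRule V L) :=
  {r | ∃ c ∈ C, r = rulePos I sgn c ∨ r = ruleNeg I sgn c} ∪
  {r | ∃ v : DTV V L,
      r = rulePos I sgn (v.app store, v.app load) ∨
      r = ruleNeg I sgn (v.app store, v.app load)} ∪
  {r | ∃ (v : V) (a : Sign), I v ∧
      r = ((.start, [StkSym.tv v a]), (.lt v a, ([] : List (StkSym V L))))} ∪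
  {r | ∃ (v : V) (a : Sign), I v ∧
      r = ((.rt v a, ([] : List (StkSym V L))), (.fin, [StkSym.tv v a]))}

/-- One transition step of an unconstrained pushdown system:
`(X, w) ⟶ (Y, w')` iff there is a suffix `s` and a rule `⟨X; u⟩ ↪ ⟨Y; v⟩`
with `w = us` and `w' = vs`. -/
def PDSStep {V L : Type} (Δ : Set (PDSRule V L))
    (c c' : PDSConfig V L) : Prop :=
  ∃ r ∈ Δ, ∃ s : List (StkSym V L),
    c = (r.1.1, r.1.2 ++ s) ∧ c' = (r.2.1, r.2.2 ++ s)

/-- The reflexive-transitive closure `⟶*` of the transition relation. -/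
def PDSSteps {V L : Type} (Δ : Set (PDSRule V L)) :
    PDSConfig V L → PDSConfig V L → Prop :=
  Relation.ReflTransGen (PDSStep Δ)

/-- `Deriv(𝒫_𝒞)`, as a relation on triples `X^a u`: `X, Y` are interesting and
`(#Start, X^a u) ⟶* (#End, Y^b v)`. -/
def Deriv {V L : Type} (I : V → Bool) (sgn : L → Sign) (load store : L)
    (C : Set (DTV V L × DTV V L)) :
    (V × Sign × List L) → (V × Sign × List L) → Prop :=
  fun p q =>
    I p.1 ∧ I q.1 ∧
      PDSSteps (Delta I sgn load store C)
        (.start, StkSym.tv p.1 p.2.1 :: symWord p.2.2)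
        (.fin, StkSym.tv q.1 q.2.1 :: symWord q.2.2)

/-- `Deriv'(𝒫_𝒞) = {(X.u, Y.v) : (X^{⟨u⟩} u, Y^{⟨v⟩} v) ∈ Deriv(𝒫_𝒞)}`. -/
def Deriv' {V L : Type} (I : V → Bool) (sgn : L → Sign) (load store : L)
    (C : Set (DTV V L × DTV V L)) :
    (V × List L) → (V × List L) → Prop :=
  fun p q =>
    Deriv I sgn load store C (p.1, wordSign sgn p.2, p.2)
      (q.1, wordSign sgn q.2, q.2)

/-!
Exchanging `#Start` with `#End` and the tags `L` with `R`, while multiplying every sign by `⊖`,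
is an involution under which `rule⊕(c)` and `rule⊖(c)` trade places once each rule is read
backwards; likewise `Δ_start` and `Δ_end`. It therefore carries a run of `𝒫_𝒞` to a run in the
opposite direction, between the dual endpoints.
-/

theorem Sign.neg_mul_neg_mul (a : Sign) : Sign.neg.mul (Sign.neg.mul a) = a := by
  cases a <;> rfl

section Duality

variable {V L : Type}

/-- The dual of a stack symbol: `v^a` becomes `v^{⊖·a}`. Field labels are fixed, as they carry
no sign of their own. -/
def StkSym.dual : StkSym V L → StkSym V L
  | .lbl ℓ => .lbl ℓ
  | .tv v a => .tv v (Sign.neg.mul a)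

/-- The dual of a control state, used to read runs backwards: `#Start` and `#End` are exchanged,
as are the tags `L` and `R`, and signs are multiplied by `⊖`. -/
def Ctl.dual : Ctl V → Ctl V
  | .start => .fin
  | .fin => .start
  | .lt v a => .rt v (Sign.neg.mul a)
  | .rt v a => .lt v (Sign.neg.mul a)
  | .un v a => .un v (Sign.neg.mul a)

/-- The dual of a configuration, taken in the control state and in each stack symbol. -/
def PDSConfig.dual (c : PDSConfig V L) : PDSConfig V L :=
  (c.1.dual, c.2.map StkSym.dual)

/-- The rule `⟨Y*; v*⟩ ↪ ⟨X*; u*⟩` dual to `⟨X; u⟩ ↪ ⟨Y; v⟩`, where `*` is duality of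
configurations; the direction of the rule is reversed. -/
def PDSRule.dual (r : PDSRule V L) : PDSRule V L :=
  (r.2.dual, r.1.dual)

theorem map_dual_symWord (u : List L) :
    (symWord u : List (StkSym V L)).map StkSym.dual = symWord u :=
  List.map_map

theorem dual_lhsCtl (I : V → Bool) (x : V) (a : Sign) :
    (lhsCtl I x a).dual = rhsCtl I x (Sign.neg.mul a) := by
  unfold lhsCtl rhsCtl
  split <;> rfl

theorem dual_rhsCtl (I : V → Bool) (x : V) (a : Sign) :
    (rhsCtl I x a).dual = lhsCtl I x (Sign.neg.mul a) := by
  unfold lhsCtl rhsCtl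
  split <;> rfl

theorem dual_rulePos (I : V → Bool) (sgn : L → Sign) (c : DTV V L × DTV V L) :
    (rulePos I sgn c).dual = ruleNeg I sgn c := by
  simp only [PDSRule.dual, PDSConfig.dual, rulePos, ruleNeg, dual_lhsCtl, dual_rhsCtl,
    map_dual_symWord]

theorem dual_ruleNeg (I : V → Bool) (sgn : L → Sign) (c : DTV V L × DTV V L) :
    (ruleNeg I sgn c).dual = rulePos I sgn c := by
  simp only [PDSRule.dual, PDSConfig.dual, rulePos, ruleNeg, dual_lhsCtl, dual_rhsCtl,
    map_dual_symWord, Sign.neg_mul_neg_mul]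

theorem dual_mem_Delta {I : V → Bool} {sgn : L → Sign} {load store : L}
    {C : Set (DTV V L × DTV V L)} {r : PDSRule V L} (hr : r ∈ Delta I sgn load store C) :
    r.dual ∈ Delta I sgn load store C := by
  rcases hr with ((⟨c, hc, rfl | rfl⟩ | ⟨v, rfl | rfl⟩) | ⟨v, a, hv, rfl⟩) | ⟨v, a, hv, rfl⟩
  · exact .inl (.inl (.inl ⟨c, hc, .inr (dual_rulePos I sgn c)⟩))
  · exact .inl (.inl (.inl ⟨c, hc, .inl (dual_ruleNeg I sgn c)⟩))
  · exact .inl (.inl (.inr ⟨v, .inr (dual_rulePos I sgn _)⟩))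
  · exact .inl (.inl (.inr ⟨v, .inl (dual_ruleNeg I sgn _)⟩))
  · exact .inr ⟨v, Sign.neg.mul a, hv, rfl⟩
  · exact .inl (.inr ⟨v, Sign.neg.mul a, hv, rfl⟩)

theorem PDSConfig.dual_append (X : Ctl V) (w s : List (StkSym V L)) :
    PDSConfig.dual (X, w ++ s) = (X.dual, w.map StkSym.dual ++ s.map StkSym.dual) :=
  congrArg (Prod.mk X.dual) List.map_append

theorem PDSStep.dual {Δ : Set (PDSRule V L)} (hΔ : ∀ r ∈ Δ, r.dual ∈ Δ)
    {c c' : PDSConfig V L} (h : PDSStep Δ c c') : PDSStep Δ c'.dual c.dual := by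
  obtain ⟨r, hr, s, rfl, rfl⟩ := h
  exact ⟨r.dual, hΔ r hr, s.map StkSym.dual, PDSConfig.dual_append .., PDSConfig.dual_append ..⟩

theorem PDSSteps.dual {Δ : Set (PDSRule V L)} (hΔ : ∀ r ∈ Δ, r.dual ∈ Δ)
    {c c' : PDSConfig V L} (h : PDSSteps Δ c c') : PDSSteps Δ c'.dual c.dual :=
  Relation.ReflTransGen.lift PDSConfig.dual (fun _ _ => PDSStep.dual hΔ) _ _
    (Relation.reflTransGen_swap.2 h)

theorem PDSConfig.dual_tv_cons_symWord (c : Ctl V) (X : V) (a : Sign) (u : List L) :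
    PDSConfig.dual (c, StkSym.tv X a :: symWord u) =
      (c.dual, StkSym.tv X (Sign.neg.mul a) :: symWord u) := by
  simp only [PDSConfig.dual, List.map_cons, StkSym.dual, map_dual_symWord]

theorem deriv_symm_general {I : V → Bool} {sgn : L → Sign} {load store : L}
    {C : Set (DTV V L × DTV V L)} {X Y : V} {a b : Sign} {u v : List L}
    (h : Deriv I sgn load store C (X, a, u) (Y, b, v)) :
    Deriv I sgn load store C (Y, Sign.neg.mul b, v) (X, Sign.neg.mul a, u) := by
  obtain ⟨hX, hY, hrun⟩ := h
  have hdual := hrun.dual fun _ => dual_mem_Delta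
  rw [PDSConfig.dual_tv_cons_symWord, PDSConfig.dual_tv_cons_symWord] at hdual
  exact ⟨hY, hX, hdual⟩

end Duality

/-- if `(X^a u, Y^b v) ∈ Deriv(𝒫_𝒞)` then
`(Y^{⊖·b} v, X^{⊖·a} u) ∈ Deriv(𝒫_𝒞)`. -/
theorem deriv_symm {V L : Type} (I : V → Bool) (sgn : L → Sign)
    (load store : L) (hload : sgn load = .pos) (hstore : sgn store = .neg)
    (C : Set (DTV V L × DTV V L))
    (X Y : V) (a b : Sign) (u v : List L)
    (h : Deriv I sgn load store C (X, a, u) (Y, b, v)) :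
    Deriv I sgn load store C (Y, Sign.neg.mul b, v) (X, Sign.neg.mul a, u) :=
  deriv_symm_general h
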